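/- arXiv:nlin/0512074 — 2 statements merged into one kernel-verified Lean document; each statement's English description precedes it below -/
import Mathlib

section
/- Let (S^1,S^2) be a Lax–Sato pair. Then (S^1,S^2) satisfies the generating Lax–Sato equations (z′−z) D^1(z′) S^j(z) = −{S^2(z′), S^j(z)} and (z′−z) D^2(z′) S^j(z) = {S^1(z′), S^j(z)} (j = 1,2), coefficientwise in z′, if and only if (S^1,S^2) satisfies the Lax–Sato equations ∂^1_n S^j = −{(z^n S^2)_+, S^j} and ∂^2_n S^j = {(z^n S^1)_+, S^j} for all n ≥ 0 and j = 1,2 together with {S^1,S^2} = 1. -/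
/-!
Common setup for the second heavenly equation hierarchy (Bogdanov–Konopelchenko).

Formal series in `z` with `z`-exponents bounded above are encoded as Hahn series
over `ℤ` in the variable `w = z⁻¹`: the coefficient at `n : ℤ` of `A : LS R` is
the coefficient of `z^{-n}` of the corresponding series.
-/

noncomputable section

/-- Series in `z` with `z`-exponents bounded above (the coefficient at `n : ℤ`
is the coefficient of `z^{-n}`). -/
abbrev LS (R : Type*) [CommRing R] : Type _ := HahnSeries ℤ R

/-- The variable `z`. -/
def zz {R : Type*} [CommRing R] : LS R := HahnSeries.single (-1 : ℤ) (1 : R)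

/-- Constant series. -/
def CC {R : Type*} [CommRing R] (r : R) : LS R := HahnSeries.C r

/-- `tail g = Σ_{k≥0} (g k) · z^{-(k+1)}` : a series in negative powers of `z`. -/
def tail {R : Type*} [CommRing R] (g : ℕ → R) : LS R :=
  HahnSeries.single (1 : ℤ) (1 : R) * HahnSeries.ofPowerSeries ℤ R (PowerSeries.mk g)

/-- `geom v = 1/(z - v) := Σ_{k≥0} v^k z^{-(k+1)}`. -/
def geom {R : Type*} [CommRing R] (v : R) : LS R := tail fun k => v ^ k

/-- The projection `(·)_-` keeping only negative powers of `z`. -/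
def truncMinus {R : Type*} [CommRing R] (A : LS R) : LS R where
  coeff n := if 1 ≤ n then A.coeff n else 0
  isPWO_support' := A.isPWO_support'.mono (fun n hn => by
    by_cases h : (1:ℤ) ≤ n <;> simp_all [Function.mem_support])

/-- The projection `(·)_+` keeping only nonnegative powers of `z`. -/
def truncPlus {R : Type*} [CommRing R] (A : LS R) : LS R where
  coeff n := if n ≤ 0 then A.coeff n else 0
  isPWO_support' := A.isPWO_support'.mono (fun n hn => by
    by_cases h : n ≤ (0:ℤ) <;> simp_all [Function.mem_support])

/-- A commutative ring equipped with pairwise commuting derivations `∂^{j+1}_n`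
(`j : Fin 2`, `n : ℕ`) and distinguished elements `t^{j+1}_n` satisfying
`∂^j_m t^k_n = δ_{jk} δ_{mn}`. -/
structure HeavenlySetting (R : Type*) [CommRing R] where
  d : Fin 2 → ℕ → R → R
  d_add : ∀ j n a b, d j n (a + b) = d j n a + d j n b
  d_mul : ∀ j n a b, d j n (a * b) = a * d j n b + d j n a * b
  d_comm : ∀ j n k m a, d j n (d k m a) = d k m (d j n a)
  t : Fin 2 → ℕ → R
  d_t : ∀ j n k m, d j n (t k m) = if j = k ∧ n = m then 1 else 0

/-- The data of a Lax–Sato pair: `Sneg j n` is the coefficient `S^{j+1}_{n+1}`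
of `z^{-(n+1)}` in `S^{j+1} = Σ_{n≥0} t^{j+1}_n z^n + Σ_{n≥1} S^{j+1}_n z^{-n}`. -/
structure LaxPair (R : Type*) [CommRing R] where
  Sneg : Fin 2 → ℕ → R

namespace HeavenlySetting

variable {R : Type*} [CommRing R] (H : HeavenlySetting R) (P : LaxPair R)

/-- The coefficient of `z^n` in `S^{j+1}`. -/
def coeffS (j : Fin 2) (n : ℤ) : R :=
  if 0 ≤ n then H.t j n.toNat else P.Sneg j (-n - 1).toNat

/-- The series `∂^{a+1}_m S^{j+1}` (its `z`-exponents are bounded above since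
`∂^{a+1}_m t^{j+1}_n = δ_{aj} δ_{mn}`). -/
def dS (a : Fin 2) (m : ℕ) (j : Fin 2) : LS R :=
  HahnSeries.single (-(m : ℤ)) (if a = j then 1 else 0)
    + tail fun k => H.d a m (P.Sneg j k)

/-- `S^{j+1}_x = ∂^1_0 S^{j+1}`. -/
def Sx (j : Fin 2) : LS R := H.dS P 0 0 j

/-- `S^{j+1}_y = ∂^2_0 S^{j+1}`. -/
def Sy (j : Fin 2) : LS R := H.dS P 1 0 j

/-- The condition `(dS^1 ∧ dS^2)_- = 0`. -/
def WedgeMinusZero : Prop :=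
  ∀ a b : Fin 2, ∀ m n : ℕ,
    truncMinus (H.dS P a m 0 * H.dS P b n 1 - H.dS P b n 0 * H.dS P a m 1) = 0

/-- The Lax–Sato equations `∂^1_n S^j = -{(z^n S^2)_+, S^j}`,
`∂^2_n S^j = {(z^n S^1)_+, S^j}` together with the bracket `{S^1,S^2} = 1`;
here `{f,g} = f_x g_y - f_y g_x` and `((z^n S^k)_+)_x = (z^n (S^k)_x)_+` etc. -/
def LaxSatoEqs : Prop :=
  (∀ n : ℕ, ∀ j : Fin 2,
    H.dS P 0 n j =
      -(truncPlus (zz ^ n * H.Sx P 1) * H.Sy P j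
        - truncPlus (zz ^ n * H.Sy P 1) * H.Sx P j)) ∧
  (∀ n : ℕ, ∀ j : Fin 2,
    H.dS P 1 n j =
      truncPlus (zz ^ n * H.Sx P 0) * H.Sy P j
        - truncPlus (zz ^ n * H.Sy P 0) * H.Sx P j) ∧
  (H.Sx P 0 * H.Sy P 1 - H.Sy P 0 * H.Sx P 1 = 1)

/-- Coefficient of `z'^k` in `D^{a+1}(z') S^{j+1}(z) = Σ_{m≥0} z'^{-m-1} ∂^{a+1}_m S^{j+1}(z)`. -/
def Dc (a j : Fin 2) (k : ℤ) : LS R :=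
  if k ≤ -1 then H.dS P a (-k - 1).toNat j else 0

/-- Generating Lax–Sato equations
`(z'-z) D^1(z') S^j(z) = -{S^2(z'), S^j(z)}` and
`(z'-z) D^2(z') S^j(z) = {S^1(z'), S^j(z)}`, stated coefficientwise in `z'`
(`k : ℤ` being the `z'`-exponent; both sides of each equation are series in `z`). -/
def GenLaxSato : Prop :=
  (∀ j : Fin 2, ∀ k : ℤ,
    H.Dc P 0 j (k - 1) - zz * H.Dc P 0 j k =
      -(CC (H.d 0 0 (H.coeffS P 1 k)) * H.Sy P j
        - CC (H.d 1 0 (H.coeffS P 1 k)) * H.Sx P j)) ∧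
  (∀ j : Fin 2, ∀ k : ℤ,
    H.Dc P 1 j (k - 1) - zz * H.Dc P 1 j k =
      CC (H.d 0 0 (H.coeffS P 0 k)) * H.Sy P j
        - CC (H.d 1 0 (H.coeffS P 0 k)) * H.Sx P j)

/-- `Θ` is a τ-function for the pair: `S^1_{n+1} = -∂^2_n Θ`, `S^2_{n+1} = ∂^1_n Θ`. -/
def IsTau (Θ : R) : Prop :=
  ∀ n : ℕ, P.Sneg 0 n = -H.d 1 n Θ ∧ P.Sneg 1 n = H.d 0 n Θ

/-- `σ` is a wave function with constant parameter `p`: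
`(z-p) D^1(z)σ = -{S^2(z), σ}` and `(z-p) D^2(z)σ = {S^1(z), σ}`,
coefficientwise in `z^{-1}`, with `p` annihilated by all derivations. -/
def IsWave (σ p : R) : Prop :=
  (∀ a : Fin 2, ∀ n : ℕ, H.d a n p = 0) ∧
  ((zz - CC p) * tail (fun n => H.d 0 n σ) =
    -(H.Sx P 1 * CC (H.d 1 0 σ) - H.Sy P 1 * CC (H.d 0 0 σ))) ∧
  ((zz - CC p) * tail (fun n => H.d 1 n σ) =
    H.Sx P 0 * CC (H.d 1 0 σ) - H.Sy P 0 * CC (H.d 0 0 σ))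

end HeavenlySetting

/-- A product of series of orders at least `a` and `b` has order at least `a + b`. -/
theorem HahnSeries.coeff_mul_eq_zero_of_lt_add {R : Type*} [CommRing R] {A B : HahnSeries ℤ R}
    {a b m : ℤ} (hA : ∀ n < a, A.coeff n = 0) (hB : ∀ n < b, B.coeff n = 0) (hm : m < a + b) :
    (A * B).coeff m = 0 := by
  rw [HahnSeries.coeff_mul]
  refine Finset.sum_eq_zero fun ij hij => ?_
  have hsum : ij.1 + ij.2 = m := (Finset.mem_antidiagonal.mp hij).2.2
  rcases lt_or_ge ij.1 a with h | h
  · rw [hA _ h, zero_mul]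
  · rw [hB _ (by omega), mul_zero]

section Series

variable {R : Type*} [CommRing R]

theorem coeff_zz_mul (A : LS R) (m : ℤ) : (zz * A).coeff m = A.coeff (m + 1) := by
  have h := HahnSeries.coeff_single_mul_add (r := (1 : R)) (x := A) (a := m + 1) (b := -1)
  simpa [zz] using h

theorem coeff_zz_pow_mul (n : ℕ) (A : LS R) (m : ℤ) :
    (zz ^ n * A).coeff m = A.coeff (m + n) := by
  induction n generalizing m with
  | zero => simp
  | succ n ih =>
    rw [pow_succ', mul_assoc, coeff_zz_mul, ih]
    congr 1
    push_cast
    ring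

theorem coeff_tail_natCast_add_one (g : ℕ → R) (n : ℕ) :
    (tail g).coeff ((n : ℤ) + 1) = g n := by
  rw [tail, HahnSeries.coeff_single_mul_add, one_mul, HahnSeries.ofPowerSeries_apply_coeff,
    PowerSeries.coeff_mk]

theorem coeff_tail_of_nonpos (g : ℕ → R) {m : ℤ} (hm : m ≤ 0) : (tail g).coeff m = 0 := by
  refine HahnSeries.coeff_mul_eq_zero_of_lt_add (a := 1) (b := 0) (fun n hn => ?_)
    (fun n hn => ?_) (by omega)
  · exact HahnSeries.coeff_single_of_ne hn.ne
  · rw [HahnSeries.ofPowerSeries_apply]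
    refine HahnSeries.embDomain_of_notMem_range ?_
    rintro ⟨k, hk⟩
    have : (k : ℤ) = n := hk
    omega

theorem coeff_truncPlus (A : LS R) (m : ℤ) :
    (truncPlus A).coeff m = if m ≤ 0 then A.coeff m else 0 := rfl

/-- `(z A)_+ = z A_+ + A_{-1}`. -/
theorem truncPlus_zz_mul (A : LS R) :
    truncPlus (zz * A) = zz * truncPlus A + CC (A.coeff 1) := by
  ext m
  rw [HahnSeries.coeff_add, coeff_zz_mul, coeff_truncPlus, coeff_truncPlus, coeff_zz_mul, CC,
    HahnSeries.C_apply, HahnSeries.coeff_single]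
  rcases lt_trichotomy m 0 with h | rfl | h
  · simp [h.le, h.ne, show m + 1 ≤ 0 by omega]
  · simp
  · simp [h.not_ge, h.ne', show ¬ m + 1 ≤ 0 by omega]

/-- The negative part of `A` does not contribute to the constant term of `A * X` when `X` has no
positive powers of `z`. -/
theorem coeff_zero_truncPlus_mul (A : LS R) {X : LS R} (hX : ∀ n < 0, X.coeff n = 0) :
    (truncPlus A * X).coeff 0 = (A * X).coeff 0 := by
  have h : ((A - truncPlus A) * X).coeff 0 = 0 := by
    refine HahnSeries.coeff_mul_eq_zero_of_lt_add (a := 1) (b := 0) (fun n hn => ?_) hX (by omega)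
    rw [HahnSeries.coeff_sub, coeff_truncPlus, if_pos (by omega), sub_self]
  rw [sub_mul, HahnSeries.coeff_sub, sub_eq_zero] at h
  exact h.symm

end Series

namespace HeavenlySetting

variable {R : Type*} [CommRing R] (H : HeavenlySetting R) (P : LaxPair R)

theorem coeff_dS_natCast_add_one (a : Fin 2) (m : ℕ) (j : Fin 2) (n : ℕ) :
    (H.dS P a m j).coeff ((n : ℤ) + 1) = H.d a m (P.Sneg j n) := by
  rw [dS, HahnSeries.coeff_add, coeff_tail_natCast_add_one,
    HahnSeries.coeff_single_of_ne (by omega), zero_add]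

theorem coeff_dS_of_nonpos (a : Fin 2) (m : ℕ) (j : Fin 2) {n : ℤ} (hn : n ≤ 0) :
    (H.dS P a m j).coeff n = if n = -(m : ℤ) ∧ a = j then 1 else 0 := by
  rw [dS, HahnSeries.coeff_add, coeff_tail_of_nonpos _ hn, add_zero, HahnSeries.coeff_single]
  split_ifs <;> simp_all

theorem coeff_dS_zero_of_neg (a j : Fin 2) {n : ℤ} (hn : n < 0) :
    (H.dS P a 0 j).coeff n = 0 := by
  rw [coeff_dS_of_nonpos _ _ _ _ _ hn.le, if_neg (by simp; omega)]

theorem truncPlus_dS_zero (a j : Fin 2) :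
    truncPlus (H.dS P a 0 j) = if a = j then 1 else 0 := by
  ext m
  rw [coeff_truncPlus]
  split_ifs with hm h h
  · rw [coeff_dS_of_nonpos _ _ _ _ _ hm, HahnSeries.coeff_one]
    simp [h]
  · rw [coeff_dS_of_nonpos _ _ _ _ _ hm]
    simp [h]
  · rw [HahnSeries.coeff_one, if_neg (by omega)]
  · simp

theorem truncPlus_zz_pow_succ_mul_dS_zero (n : ℕ) (a j : Fin 2) :
    truncPlus (zz ^ (n + 1) * H.dS P a 0 j) =
      zz * truncPlus (zz ^ n * H.dS P a 0 j) + CC (H.d a 0 (P.Sneg j n)) := by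
  rw [pow_succ', mul_assoc, truncPlus_zz_mul, coeff_zz_pow_mul, add_comm (1 : ℤ),
    coeff_dS_natCast_add_one]

/-- The flow `∂^{a+1}_n S^{j+1} = ε {(z^n S^{k+1})_+, S^{j+1}}`. -/
def LaxFlow (a k : Fin 2) (ε : LS R) (n : ℕ) (j : Fin 2) : Prop :=
  H.dS P a n j =
    ε * (truncPlus (zz ^ n * H.Sx P k) * H.Sy P j - truncPlus (zz ^ n * H.Sy P k) * H.Sx P j)

/-- The coefficient of `z'^i` in `(z' - z) D^{a+1}(z') S^{j+1}(z) = ε {S^{k+1}(z'), S^{j+1}(z)}`. -/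
def GenFlow (a k : Fin 2) (ε : LS R) (j : Fin 2) (i : ℤ) : Prop :=
  H.Dc P a j (i - 1) - zz * H.Dc P a j i =
    ε * (CC (H.d 0 0 (H.coeffS P k i)) * H.Sy P j - CC (H.d 1 0 (H.coeffS P k i)) * H.Sx P j)

theorem genFlow_neg_natCast_sub_one_iff (a k : Fin 2) (ε : LS R) (j : Fin 2) (n : ℕ) :
    H.GenFlow P a k ε j (-(n : ℤ) - 1) ↔ H.dS P a (n + 1) j - zz * H.dS P a n j =
      ε * (CC (H.d 0 0 (P.Sneg k n)) * H.Sy P j - CC (H.d 1 0 (P.Sneg k n)) * H.Sx P j) := by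
  have h₁ : (-(-(n : ℤ) - 1 - 1) - 1).toNat = n + 1 := by omega
  have h₂ : (-(-(n : ℤ) - 1) - 1).toNat = n := by omega
  rw [GenFlow, Dc, Dc, coeffS, if_pos (by omega), if_pos (by omega), if_neg (by omega), h₁, h₂]

theorem genFlow_zero_iff (a k : Fin 2) (ε : LS R) (j : Fin 2) :
    H.GenFlow P a k ε j 0 ↔ H.LaxFlow P a k ε 0 j := by
  have hd (b : Fin 2) : CC (H.d b 0 (H.t k 0)) = truncPlus (H.dS P b 0 k) := by
    rw [truncPlus_dS_zero, H.d_t]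
    split_ifs <;> simp_all [CC]
  simp [GenFlow, LaxFlow, Dc, coeffS, hd, Sx, Sy]

theorem genFlow_of_pos (a k : Fin 2) (ε : LS R) (j : Fin 2) {i : ℤ} (hi : 0 < i) :
    H.GenFlow P a k ε j i := by
  have h : 0 ≠ i.toNat := by omega
  simp [GenFlow, Dc, coeffS, hi.le, H.d_t, h, CC, show ¬ i ≤ 0 by omega,
    show ¬ i ≤ -1 by omega]

theorem genFlow_iff_laxFlow (a k : Fin 2) (ε : LS R) (j : Fin 2) :
    (∀ i, H.GenFlow P a k ε j i) ↔ ∀ n, H.LaxFlow P a k ε n j := by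
  constructor
  · intro h n
    induction n with
    | zero => exact (H.genFlow_zero_iff P a k ε j).mp (h 0)
    | succ n ih =>
      have hn := (H.genFlow_neg_natCast_sub_one_iff P a k ε j n).mp (h _)
      simp only [LaxFlow, Sx, Sy, truncPlus_zz_pow_succ_mul_dS_zero] at ih hn ⊢
      linear_combination hn + zz * ih
  · intro h i
    rcases lt_trichotomy i 0 with hi | rfl | hi
    · obtain ⟨n, rfl⟩ : ∃ n : ℕ, i = -(n : ℤ) - 1 := ⟨(-i - 1).toNat, by omega⟩
      rw [genFlow_neg_natCast_sub_one_iff]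
      have hn := h n
      have hn' := h (n + 1)
      simp only [LaxFlow, Sx, Sy, truncPlus_zz_pow_succ_mul_dS_zero] at hn hn' ⊢
      linear_combination hn' - zz * hn
    · exact (H.genFlow_zero_iff P a k ε j).mpr (h 0)
    · exact H.genFlow_of_pos P a k ε j hi

theorem genLaxSato_iff :
    H.GenLaxSato P ↔ (∀ j i, H.GenFlow P 0 1 (-1) j i) ∧ ∀ j i, H.GenFlow P 1 0 1 j i := by
  simp only [GenLaxSato, GenFlow, neg_one_mul, one_mul]

theorem laxSatoEqs_iff :
    H.LaxSatoEqs P ↔ (∀ n j, H.LaxFlow P 0 1 (-1) n j) ∧ (∀ n j, H.LaxFlow P 1 0 1 n j) ∧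
      H.Sx P 0 * H.Sy P 1 - H.Sy P 0 * H.Sx P 1 = 1 := by
  simp only [LaxSatoEqs, LaxFlow, neg_one_mul, one_mul]

/-- The flows `∂^1_n S^1 = -{(z^n S^2)_+, S^1}` force `{S^1, S^2} = 1`: their constant terms are
the coefficients of the bracket. -/
theorem bracket_eq_one (h : ∀ n, H.LaxFlow P 0 1 (-1) n 0) :
    H.Sx P 0 * H.Sy P 1 - H.Sy P 0 * H.Sx P 1 = 1 := by
  have hx (j : Fin 2) : ∀ n < 0, (H.Sx P j).coeff n = 0 := fun n => H.coeff_dS_zero_of_neg P 0 j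
  have hy (j : Fin 2) : ∀ n < 0, (H.Sy P j).coeff n = 0 := fun n => H.coeff_dS_zero_of_neg P 1 j
  ext m
  rcases lt_or_ge m 0 with hm | hm
  · rw [HahnSeries.coeff_sub,
      HahnSeries.coeff_mul_eq_zero_of_lt_add (hx 0) (hy 1) (by omega),
      HahnSeries.coeff_mul_eq_zero_of_lt_add (hy 0) (hx 1) (by omega),
      HahnSeries.coeff_one, if_neg hm.ne, sub_zero]
  · obtain ⟨n, rfl⟩ := Int.eq_ofNat_of_zero_le hm
    have hn := congrArg (fun A : LS R => A.coeff 0) (h n)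
    simp only [neg_one_mul, HahnSeries.coeff_neg, HahnSeries.coeff_sub,
      coeff_zero_truncPlus_mul _ (hx 0), coeff_zero_truncPlus_mul _ (hy 0), mul_assoc,
      coeff_zz_pow_mul, zero_add, coeff_dS_of_nonpos _ _ _ _ _ le_rfl] at hn
    rw [HahnSeries.coeff_sub, HahnSeries.coeff_one, mul_comm (H.Sx P 0), mul_comm (H.Sy P 0),
      ← neg_sub, ← hn]
    simp [eq_comm]

end HeavenlySetting

/-- A Lax–Sato pair satisfies the generating Lax–Sato equations
(coefficientwise in `z'`) iff it satisfies the Lax–Sato equations together with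
`{S^1,S^2} = 1`. -/
theorem heavenly_genLaxSato_iff_laxSato {R : Type*} [CommRing R]
    (H : HeavenlySetting R) (P : LaxPair R) :
    H.GenLaxSato P ↔ H.LaxSatoEqs P := by
  rw [H.genLaxSato_iff, H.laxSatoEqs_iff]
  simp only [H.genFlow_iff_laxFlow]
  constructor
  · rintro ⟨h₁, h₂⟩
    exact ⟨fun n j => h₁ j n, fun n j => h₂ j n, H.bracket_eq_one P (h₁ 0)⟩
  · rintro ⟨h₁, h₂, -⟩
    exact ⟨fun j n => h₁ n j, fun j n => h₂ n j⟩
end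
end

section
/- Let R be a field (of characteristic zero) in the setting below, let (S^1,S^2) be a Lax–Sato pair satisfying the Lax–Sato equations ∂^2_n S^1 = {(z^n S^1)_+, S^1} for all n ≥ 0, and suppose S^1_y = V·S^1_x where V = Σ_{i=1}^{N} u_i/(z−v_i) with u_i, v_i ∈ R and v_1, …, v_N pairwise distinct (here 1/(z−v_i) := Σ_{k≥0} v_i^k z^{−k−1}, and the identity S^1_y = V S^1_x is coefficientwise in z^{−1}). Then there exist λ_0, …, λ_N ∈ R, not all zero, such that Σ_{n=0}^{N} λ_n ∂^2_n S^1 = 0; in particular, if the dependence can be normalized with λ_N = 1, then ∂^2_N S^1 = Σ_{i=0}^{N−1} φ_i ∂^2_i S^1 with φ_i := −λ_i. -/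
/-!
Common setup for the second heavenly equation hierarchy (Bogdanov–Konopelchenko).

Formal series in `z` with `z`-exponents bounded above are encoded as Hahn series
over `ℤ` in the variable `w = z⁻¹`: the coefficient at `n : ℤ` of `A : LS R` is
the coefficient of `z^{-n}` of the corresponding series.
-/

noncomputable section

section HeavenlyLemmas

open Polynomial hiding CC

lemma CC_mul_coeff {R : Type*} [CommRing R] (r : R) (A : LS R) (n : ℤ) :
    (CC r * A).coeff n = r * A.coeff n := by
  rw [CC, HahnSeries.C_mul_eq_smul, HahnSeries.coeff_smul, smul_eq_mul]

lemma algebraMap_eq_CC {R : Type*} [CommRing R] (r : R) :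
    algebraMap R (LS R) r = CC r := by
  simp [CC, HahnSeries.algebraMap_apply']

lemma tail_coeff_of_nonpos {R : Type*} [CommRing R] (g : ℕ → R) {n : ℤ} (hn : n ≤ 0) :
    (tail g).coeff n = 0 := by
  have h : n = (n - 1) + 1 := by ring
  rw [tail, h, HahnSeries.coeff_single_mul_add, one_mul, HahnSeries.ofPowerSeries_apply,
    HahnSeries.embDomain_of_notMem_range]
  rintro ⟨k, hk⟩
  simp at hk
  omega

/-- `1/(z - v)` is the inverse of `z - v`. -/
lemma zz_sub_CC_mul_geom {R : Type*} [CommRing R] (v : R) :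
    (zz - CC v) * geom v = 1 := by
  have hC : (CC v : LS R) = HahnSeries.ofPowerSeries ℤ R (PowerSeries.C v) := by
    simp [CC]
  have hX : (HahnSeries.single (1 : ℤ) (1 : R) : LS R)
      = HahnSeries.ofPowerSeries ℤ R PowerSeries.X := by
    simp
  have hz : (zz : LS R) * HahnSeries.single (1 : ℤ) (1 : R) = 1 := by
    simp [zz, HahnSeries.single_mul_single]
  have hps : (1 - PowerSeries.C v * PowerSeries.X) * PowerSeries.mk (fun k => v ^ k)
      = (1 : PowerSeries R) := by
    ext n
    cases n with
    | zero => simp [sub_mul, mul_assoc]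
    | succ n => simp [sub_mul, mul_assoc, PowerSeries.coeff_succ_X_mul, pow_succ',
        PowerSeries.coeff_one]
  rw [geom, tail, ← mul_assoc, sub_mul, hz, hC, hX, ← map_mul,
    ← map_one (HahnSeries.ofPowerSeries ℤ R), ← map_sub, ← map_mul, hps]

lemma zz_pow {R : Type*} [CommRing R] (k : ℕ) :
    (zz : LS R) ^ k = HahnSeries.single (-(k : ℤ)) (1 : R) := by
  simp [zz, HahnSeries.single_pow]

/-- The value of a polynomial at the variable `z` has no negative powers of `z`. -/
lemma aeval_zz_coeff_of_pos {R : Type*} [CommRing R] (q : R[X]) {n : ℤ} (hn : 0 < n) :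
    (aeval (zz : LS R) q).coeff n = 0 := by
  rw [aeval_eq_sum_range, HahnSeries.coeff_sum]
  refine Finset.sum_eq_zero fun k _ => ?_
  rw [Algebra.smul_def, algebraMap_eq_CC, CC_mul_coeff, zz_pow,
    HahnSeries.coeff_single_of_ne (by omega), mul_zero]

/-- The polynomial part of a series is a polynomial in `z`. -/
lemma exists_aeval_zz_eq_truncPlus {R : Type*} [CommRing R] (A : LS R) :
    ∃ q : R[X], aeval (zz : LS R) q = truncPlus A := by
  refine ⟨∑ k ∈ Finset.range ((-A.order).toNat + 1), C (A.coeff (-(k : ℤ))) * X ^ k, ?_⟩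
  ext n
  simp only [map_sum, map_mul, aeval_C, map_pow, aeval_X, zz_pow, HahnSeries.coeff_sum,
    algebraMap_eq_CC, CC_mul_coeff, HahnSeries.coeff_single, truncPlus, mul_ite, mul_one, mul_zero]
  split_ifs with hn
  · obtain ⟨m, rfl⟩ : ∃ m : ℕ, n = -(m : ℤ) := ⟨(-n).toNat, by omega⟩
    simp only [neg_inj, Nat.cast_inj, Finset.sum_ite_eq, Finset.mem_range]
    split_ifs with hm
    · rfl
    · exact (HahnSeries.coeff_eq_zero_of_lt_order (by omega)).symm
  · exact Finset.sum_eq_zero fun k _ => if_neg (by omega)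

/-- `q(z)/(z - v)` is `q(v)/(z - v)` plus a polynomial in `z`. -/
lemma exists_aeval_zz_mul_geom {R : Type*} [CommRing R] (q : R[X]) (v : R) :
    ∃ r : R[X], aeval (zz : LS R) q * geom v = CC (q.eval v) * geom v + aeval zz r := by
  obtain ⟨r, hr⟩ := X_sub_C_dvd_sub_C_eval (a := v) (p := q)
  refine ⟨r, ?_⟩
  have h := congrArg (aeval (zz : LS R)) (eq_add_of_sub_eq hr)
  simp only [map_add, map_mul, map_sub, aeval_X, aeval_C, algebraMap_eq_CC] at h
  rw [h, add_mul, mul_right_comm, zz_sub_CC_mul_geom]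
  ring

lemma coeff_mul_of_nonpos {R : Type*} [CommRing R] {f g : LS R}
    (hf : ∀ n ≤ 0, f.coeff n = 0) (hg : ∀ n < 0, g.coeff n = 0) {n : ℤ} (hn : n ≤ 0) :
    (f * g).coeff n = 0 := by
  rw [HahnSeries.coeff_mul]
  refine Finset.sum_eq_zero fun ij hij => ?_
  rw [Finset.mem_antidiagonal] at hij
  rcases le_or_gt ij.1 0 with h | h
  · rw [hf _ h, zero_mul]
  · rw [hg _ (by omega), mul_zero]

/-- If `g` has a nonzero constant coefficient and `p` has no negative powers of `z`, then
`p * g` has only negative powers of `z` only when `p = 0`. -/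
lemma eq_zero_of_mul_coeff_nonpos {R : Type*} [CommRing R] [IsDomain R] {p g : LS R}
    (hp : ∀ n > 0, p.coeff n = 0) (hg : g.coeff 0 ≠ 0)
    (h : ∀ n ≤ 0, (p * g).coeff n = 0) : p = 0 := by
  by_contra hp0
  have hg0 : g ≠ 0 := fun h0 => hg (by simp [h0])
  have hgle : g.order ≤ 0 := HahnSeries.order_le_of_coeff_ne_zero hg
  have hple : p.order ≤ 0 := by
    by_contra hlt
    exact HahnSeries.coeff_order_eq_zero.not.2 hp0 (hp _ (by omega))
  have hpg := HahnSeries.coeff_order_eq_zero.not.2 (mul_ne_zero hp0 hg0)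
  rw [HahnSeries.order_mul hp0 hg0] at hpg
  exact hpg (h _ (by omega))

lemma HeavenlySetting.Sx_zero_coeff_zero {R : Type*} [CommRing R] (H : HeavenlySetting R)
    (P : LaxPair R) : (H.Sx P 0).coeff 0 = 1 := by
  simp [HeavenlySetting.Sx, HeavenlySetting.dS, tail_coeff_of_nonpos]

lemma HeavenlySetting.Sx_zero_coeff_of_neg {R : Type*} [CommRing R] (H : HeavenlySetting R)
    (P : LaxPair R) {n : ℤ} (hn : n < 0) : (H.Sx P 0).coeff n = 0 := by
  simp [HeavenlySetting.Sx, HeavenlySetting.dS, tail_coeff_of_nonpos _ hn.le, hn.ne]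

lemma HeavenlySetting.dS_one_zero_coeff_of_nonpos {R : Type*} [CommRing R]
    (H : HeavenlySetting R) (P : LaxPair R) (m : ℕ) {n : ℤ} (hn : n ≤ 0) :
    (H.dS P 1 m 0).coeff n = 0 := by
  simp [HeavenlySetting.dS, tail_coeff_of_nonpos _ hn]

/-- Each `∂^2_n S^1` is an `R`-linear combination of the series `S^1_x/(z - v_i)`. -/
lemma dS_eq_sum_geom {R : Type*} [CommRing R] [IsDomain R]
    (H : HeavenlySetting R) (P : LaxPair R)
    (hLS : ∀ n : ℕ, H.dS P 1 n 0 =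
      truncPlus (zz ^ n * H.Sx P 0) * H.Sy P 0 - truncPlus (zz ^ n * H.Sy P 0) * H.Sx P 0)
    {N : ℕ} (u v : Fin N → R)
    (hratio : H.Sy P 0 = (∑ i : Fin N, CC (u i) * geom (v i)) * H.Sx P 0) (n : ℕ) :
    ∃ c : Fin N → R, H.dS P 1 n 0 = ∑ i, CC (c i) * geom (v i) * H.Sx P 0 := by
  obtain ⟨a, ha⟩ := exists_aeval_zz_eq_truncPlus (zz ^ n * H.Sx P 0)
  obtain ⟨b, hb⟩ := exists_aeval_zz_eq_truncPlus (zz ^ n * H.Sy P 0)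
  choose r hr using fun i => exists_aeval_zz_mul_geom a (v i)
  let E : LS R := ∑ i, CC (u i * a.eval (v i)) * geom (v i)
  have hsplit : H.dS P 1 n 0
      = (E + aeval zz ((∑ i, C (u i) * r i) - b)) * H.Sx P 0 := by
    rw [hLS n, ← ha, ← hb]
    nth_rewrite 1 [hratio]
    rw [← mul_assoc, ← sub_mul, map_sub, map_sum, ← add_sub_assoc, ← Finset.sum_add_distrib,
      Finset.mul_sum]
    congr 2
    refine Finset.sum_congr rfl fun i _ => ?_
    rw [mul_left_comm, hr i, map_mul, aeval_C, algebraMap_eq_CC]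
    simp only [CC, map_mul]
    ring
  have hE : ∀ k ≤ 0, E.coeff k = 0 := fun k hk => by
    rw [HahnSeries.coeff_sum]
    refine Finset.sum_eq_zero fun i _ => ?_
    rw [CC_mul_coeff, geom, tail_coeff_of_nonpos _ hk, mul_zero]
  have hzero : aeval (zz : LS R) ((∑ i, C (u i) * r i) - b) = 0 := by
    refine eq_zero_of_mul_coeff_nonpos (g := H.Sx P 0)
      (fun k hk => aeval_zz_coeff_of_pos _ hk) (by simp [H.Sx_zero_coeff_zero P]) fun k hk => ?_
    rw [← sub_eq_of_eq_add' (hsplit.trans (add_mul _ _ _)), HahnSeries.coeff_sub,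
      H.dS_one_zero_coeff_of_nonpos P n hk,
      coeff_mul_of_nonpos hE (fun k hk => H.Sx_zero_coeff_of_neg P hk) hk, sub_zero]
  refine ⟨fun i => u i * a.eval (v i), ?_⟩
  rw [hsplit, hzero, add_zero, Finset.sum_mul]

end HeavenlyLemmas

/-- Over a field of characteristic zero, if the pair satisfies the
Lax–Sato equations `∂^2_n S^1 = {(z^n S^1)_+, S^1}` and `S^1_y = V · S^1_x` with
`V = Σ_i u_i/(z - v_i)` (the `v_i` pairwise distinct), then `∂^2_0 S^1, …, ∂^2_N S^1`
are linearly dependent over `R`: there are `λ_0, …, λ_N`, not all zero, with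
`Σ_{n≤N} λ_n ∂^2_n S^1 = 0`; in particular, when normalized with `λ_N = 1`,
`∂^2_N S^1 = Σ_{i<N} φ_i ∂^2_i S^1` with `φ_i = -λ_i`. -/
theorem heavenly_rational_ratio_implies_dependence {R : Type*} [Field R] [CharZero R]
    (H : HeavenlySetting R) (P : LaxPair R)
    (hLS : ∀ n : ℕ, H.dS P 1 n 0 =
      truncPlus (zz ^ n * H.Sx P 0) * H.Sy P 0 - truncPlus (zz ^ n * H.Sy P 0) * H.Sx P 0)
    (N : ℕ) (u v : Fin N → R) (hv : Function.Injective v)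
    (hratio : H.Sy P 0 = (∑ i : Fin N, CC (u i) * geom (v i)) * H.Sx P 0) :
    ∃ l : ℕ → R, (∃ n ≤ N, l n ≠ 0) ∧
      (∑ n ∈ Finset.range (N + 1), CC (l n) * H.dS P 1 n 0) = 0 ∧
      (l N = 1 → H.dS P 1 N 0 = ∑ i ∈ Finset.range N, CC (-l i) * H.dS P 1 i 0) := by
  choose c hc using dS_eq_sum_geom H P hLS u v hratio
  let M : Matrix (Fin N) (Fin (N + 1)) R := fun i n => c n i
  obtain ⟨w, hw, hw0⟩ := (Submodule.ne_bot_iff _).1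
    (LinearMap.ker_ne_bot_of_finrank_lt (f := M.mulVecLin) (by simp))
  have hM : ∀ i, ∑ n : Fin (N + 1), c n i * w n = 0 := fun i => congrFun hw i
  let l : ℕ → R := fun n => if h : n < N + 1 then w ⟨n, h⟩ else 0
  have hl : ∀ n : Fin (N + 1), l n = w n := fun n => dif_pos n.2
  have hsum : ∑ n ∈ Finset.range (N + 1), CC (l n) * H.dS P 1 n 0 = 0 := by
    rw [Finset.sum_range]
    calc ∑ n : Fin (N + 1), CC (l n) * H.dS P 1 n 0
        = ∑ i, CC (∑ n : Fin (N + 1), c n i * w n) * geom (v i) * H.Sx P 0 := by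
          simp_rw [hc, hl, CC, map_sum, Finset.sum_mul, Finset.mul_sum]
          rw [Finset.sum_comm]
          refine Finset.sum_congr rfl fun i _ => Finset.sum_congr rfl fun n _ => ?_
          rw [map_mul]
          ring
      _ = 0 := by simp [hM, CC]
  refine ⟨l, ?_, hsum, fun hN => ?_⟩
  · obtain ⟨n, hn⟩ := Function.ne_iff.1 hw0
    exact ⟨n, Nat.lt_succ_iff.1 n.2, by rw [hl]; exact hn⟩
  · rw [Finset.sum_range_succ, hN] at hsum
    have hone : (CC (1 : R) : LS R) = 1 := map_one HahnSeries.C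
    rw [hone, one_mul] at hsum
    rw [eq_neg_of_add_eq_zero_right hsum, ← Finset.sum_neg_distrib]
    exact Finset.sum_congr rfl fun i _ => by simp [CC]
end
end
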